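/- Every tuple of reflections of G4 that contains at least four entries from a single conjugacy class has, in its Hurwitz orbit, a tuple with two consecutive equal entries. -/

import Mathlib

noncomputable section

open Matrix Complex

/-- The `i`-th Hurwitz move on length-`k` tuples of group elements. -/
def IsHurwitzMove {G : Type*} [Group G] {k : ℕ} (t t' : Fin k → G) : Prop :=
  ∃ i : ℕ, ∃ h : i + 1 < k,
    t' ⟨i, Nat.lt_of_succ_lt h⟩ = t ⟨i + 1, h⟩ ∧
    t' ⟨i + 1, h⟩ = (t ⟨i + 1, h⟩)⁻¹ * t ⟨i, Nat.lt_of_succ_lt h⟩ * t ⟨i + 1, h⟩ ∧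
    ∀ j : Fin k, (j : ℕ) ≠ i → (j : ℕ) ≠ i + 1 → t' j = t j

/-- Two tuples lie in the same Hurwitz orbit. -/
def SameHurwitzOrbit {G : Type*} [Group G] {k : ℕ} (t t' : Fin k → G) : Prop :=
  Relation.EqvGen IsHurwitzMove t t'

/-- A group element `r` appears (as an entry) in the Hurwitz orbit of the tuple `t`. -/
def Appears {G : Type*} [Group G] {k : ℕ} (r : G) (t : Fin k → G) : Prop :=
  ∃ s : Fin k → G, SameHurwitzOrbit t s ∧ ∃ j, s j = r

/-- A tuple has two consecutive equal entries. -/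
def HasConsecutiveEqualPair {G : Type*} [Group G] {k : ℕ} (t : Fin k → G) : Prop :=
  ∃ i : ℕ, ∃ h : i + 1 < k, t ⟨i, Nat.lt_of_succ_lt h⟩ = t ⟨i + 1, h⟩

/-- Replace the `p`-th entry of a tuple by two consecutive copies of its square. -/
def doubleAt {G : Type*} [Group G] {m : ℕ} (t : Fin m → G) (p : Fin m) : Fin (m + 1) → G :=
  fun j =>
    if h1 : (j : ℕ) < (p : ℕ) then t ⟨j, h1.trans p.isLt⟩
    else if h2 : (j : ℕ) ≤ (p : ℕ) + 1 then (t p) ^ 2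
    else t ⟨(j : ℕ) - 1, by have := j.isLt; omega⟩

/-- `ω = e^(2πi/3)`. -/
def ω : ℂ := Complex.exp (2 * Real.pi * Complex.I / 3)

def AMat : Matrix (Fin 2) (Fin 2) ℂ := !![1, 0; 0, ω]

def BMat : Matrix (Fin 2) (Fin 2) ℂ :=
  !![(ω - ω ^ 2) / 3, ω ^ 2; (-2 * ω ^ 2) / 3, (-ω - 2 * ω ^ 2) / 3]

/-- The complex reflection group G₄ as the subgroup of GL(2,ℂ) generated by `AMat`, `BMat`. -/
def G4 : Subgroup (GL (Fin 2) ℂ) :=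
  Subgroup.closure {g : GL (Fin 2) ℂ |
    (g : Matrix (Fin 2) (Fin 2) ℂ) = AMat ∨ (g : Matrix (Fin 2) (Fin 2) ℂ) = BMat}

/-- The matrix underlying an element of G₄. -/
def mat (t : G4) : Matrix (Fin 2) (Fin 2) ℂ := ((t : GL (Fin 2) ℂ) : Matrix (Fin 2) (Fin 2) ℂ)

/-- A reflection in G₄: a non-identity element with eigenvalue 1. -/
def IsReflection (t : G4) : Prop := t ≠ 1 ∧ (mat t - 1).det = 0

/-- The conjugacy class R₁ of reflections of determinant ω. -/
def R1 : Set G4 := {t | IsReflection t ∧ (mat t).det = ω}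

/-- The conjugacy class R₂ of reflections of determinant ω². -/
def R2 : Set G4 := {t | IsReflection t ∧ (mat t).det = ω ^ 2}

/-- A Coxeter element of G₄: an element with a primitive 6th root of unity as eigenvalue. -/
def IsCoxeter (c : G4) : Prop :=
  ∃ ζ : ℂ, IsPrimitiveRoot ζ 6 ∧ (mat c - ζ • (1 : Matrix (Fin 2) (Fin 2) ℂ)).det = 0

/-- The relators of G₅: a³, b³, abab(baba)⁻¹. -/
def g5Rels : Set (FreeGroup (Fin 2)) :=
  {FreeGroup.of 0 ^ 3, FreeGroup.of 1 ^ 3,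
    FreeGroup.of 0 * FreeGroup.of 1 * FreeGroup.of 0 * FreeGroup.of 1 *
      (FreeGroup.of 1 * FreeGroup.of 0 * FreeGroup.of 1 * FreeGroup.of 0)⁻¹}

/-- The complex reflection group G₅, by its presentation ⟨a,b | a³ = b³ = 1, abab = baba⟩. -/
abbrev G5 := PresentedGroup g5Rels

def ga : G5 := PresentedGroup.of 0
def gb : G5 := PresentedGroup.of 1

/-- The conjugacy class of `a` in G₅. -/
def S1 : Set G5 := {t | IsConj ga t}
/-- The conjugacy class of `b` in G₅. -/
def S2 : Set G5 := {t | IsConj gb t}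
/-- The conjugacy class of `a²` in G₅. -/
def S3 : Set G5 := {t | IsConj (ga ^ 2) t}
/-- The conjugacy class of `b²` in G₅. -/
def S4 : Set G5 := {t | IsConj (gb ^ 2) t}

/-- A reflection in G₅: a conjugate of a, b, a², or b². -/
def IsReflection5 (t : G5) : Prop := t ∈ S1 ∨ t ∈ S2 ∨ t ∈ S3 ∨ t ∈ S4

/-- A Coxeter element of G₅: an element of order 12. -/
def IsCoxeter5 (c : G5) : Prop := orderOf c = 12

section Hurwitz
variable {G : Type*} [Group G] {k : ℕ}

def hmv (t : Fin k → G) (i : ℕ) (h : i + 1 < k) : Fin k → G := fun j =>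
  if (j : ℕ) = i then t ⟨i + 1, h⟩
  else if (j : ℕ) = i + 1 then
    (t ⟨i + 1, h⟩)⁻¹ * t ⟨i, Nat.lt_of_succ_lt h⟩ * t ⟨i + 1, h⟩
  else t j

lemma hmv_orbit (t : Fin k → G) (i : ℕ) (h : i + 1 < k) : SameHurwitzOrbit t (hmv t i h) := by
  refine Relation.EqvGen.rel _ _ ⟨i, h, ?_, ?_, ?_⟩
  · simp [hmv]
  · simp [hmv]
  · intro j h1 h2
    simp [hmv, h1, h2]

lemma orbit_trans {t s r : Fin k → G} (h1 : SameHurwitzOrbit t s) (h2 : SameHurwitzOrbit s r) :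
    SameHurwitzOrbit t r := Relation.EqvGen.trans _ _ _ h1 h2

lemma rot_last (t : Fin k → G) (i : ℕ) (h : i + 1 < k) (p q x : G)
    (hp : t ⟨i, Nat.lt_of_succ_lt h⟩ = p) (hq : t ⟨i + 1, h⟩ = q)
    (hx : x = q ∨ x = q⁻¹ * p * q ∨ x = (q⁻¹ * p * q)⁻¹ * q * (q⁻¹ * p * q)) :
    ∃ s : Fin k → G, SameHurwitzOrbit t s ∧ s ⟨i + 1, h⟩ = x ∧
      ∀ j : Fin k, (j : ℕ) ≠ i → (j : ℕ) ≠ i + 1 → s j = t j := by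
  rcases hx with rfl | rfl | rfl
  · exact ⟨t, Relation.EqvGen.refl _, hq, fun _ _ _ => rfl⟩
  · refine ⟨hmv t i h, hmv_orbit t i h, ?_, ?_⟩
    · simp [hmv, hp, hq]
    · intro j h1 h2
      simp [hmv, h1, h2]
  · refine ⟨hmv (hmv t i h) i h, orbit_trans (hmv_orbit t i h) (hmv_orbit _ i h), ?_, ?_⟩
    · simp [hmv, hp, hq]
    · intro j h1 h2
      simp [hmv, h1, h2]

lemma rot_first (t : Fin k → G) (i : ℕ) (h : i + 1 < k) (p q x : G)
    (hp : t ⟨i, Nat.lt_of_succ_lt h⟩ = p) (hq : t ⟨i + 1, h⟩ = q)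
    (hx : x = p ∨ x = q ∨ x = q⁻¹ * p * q) :
    ∃ s : Fin k → G, SameHurwitzOrbit t s ∧ s ⟨i, Nat.lt_of_succ_lt h⟩ = x ∧
      ∀ j : Fin k, (j : ℕ) ≠ i → (j : ℕ) ≠ i + 1 → s j = t j := by
  rcases hx with rfl | rfl | rfl
  · exact ⟨t, Relation.EqvGen.refl _, hp, fun _ _ _ => rfl⟩
  · refine ⟨hmv t i h, hmv_orbit t i h, ?_, ?_⟩
    · simp [hmv, hq]
    · intro j h1 h2
      simp [hmv, h1, h2]
  · refine ⟨hmv (hmv t i h) i h, orbit_trans (hmv_orbit t i h) (hmv_orbit _ i h), ?_, ?_⟩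
    · simp [hmv, hp, hq]
    · intro j h1 h2
      simp [hmv, h1, h2]

open Classical in
lemma to_front (P : G → Prop) (hP : ∀ x y, P (y⁻¹ * x * y) ↔ P x) (m : ℕ) :
    ∀ t : Fin k → G, (∑ j : Fin k, if P (t j) then (j : ℕ) else 0) = m →
      4 ≤ (Finset.univ.filter fun j => P (t j)).card →
      ∃ s, SameHurwitzOrbit t s ∧ ∃ h : 3 < k, ∀ j : Fin k, (j : ℕ) ≤ 3 → P (s j) := by
  induction m using Nat.strong_induction_on with
  | _ m ih =>
  intro t hm hc
  by_cases hex : ∃ i : ℕ, ∃ h : i + 1 < k, ¬ P (t ⟨i, Nat.lt_of_succ_lt h⟩) ∧ P (t ⟨i + 1, h⟩)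
  · obtain ⟨i, h, hn, hy⟩ := hex
    set a : Fin k := ⟨i, Nat.lt_of_succ_lt h⟩ with ha
    set b : Fin k := ⟨i + 1, h⟩ with hb
    have hab : a ≠ b := by simp [ha, hb]
    have key : ∀ j, P (hmv t i h j) ↔ P (t (Equiv.swap a b j)) := by
      intro j
      by_cases h1 : j = a
      · subst h1; simp [hmv, ha, hb]
      · by_cases h2 : j = b
        · subst h2
          simp only [Equiv.swap_apply_right]
          simp [hmv, ha, hb, hP]
        · rw [Equiv.swap_apply_of_ne_of_ne h1 h2]
          have h1' : (j : ℕ) ≠ i := fun e => h1 (Fin.ext e)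
          have h2' : (j : ℕ) ≠ i + 1 := fun e => h2 (Fin.ext e)
          simp [hmv, h1', h2']
    have hsum : (∑ j : Fin k, if P (hmv t i h j) then (j : ℕ) else 0) < m := by
      rw [← hm]
      have e1 : (∑ j : Fin k, if P (hmv t i h j) then (j : ℕ) else 0) =
          ∑ j : Fin k, if P (t j) then ((Equiv.swap a b j : Fin k) : ℕ) else 0 := by
        rw [← Equiv.sum_comp (Equiv.swap a b)]
        refine Finset.sum_congr rfl fun j _ => ?_
        simp [key]
      rw [e1]
      apply Finset.sum_lt_sum
      · intro j _
        by_cases hj : P (t j)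
        · have hja : j ≠ a := fun e => hn (e ▸ hj)
          by_cases hjb : j = b
          · rw [hjb, if_pos hy, if_pos hy]; simp [ha, hb]
          · rw [Equiv.swap_apply_of_ne_of_ne hja hjb]
        · simp [hj]
      · exact ⟨b, Finset.mem_univ _, by rw [if_pos hy, if_pos hy]; simp [ha, hb]⟩
    obtain ⟨s, hs, h'⟩ := ih _ hsum (hmv t i h) rfl (by
      refine hc.trans (le_of_eq ?_)
      refine Finset.card_bij (fun j _ => Equiv.swap a b j) ?_ ?_ ?_
      · intro j hj; simpa [key] using hj
      · intro x _ y _ e; exact (Equiv.swap a b).injective e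
      · intro j hj; exact ⟨Equiv.swap a b j, by simpa [key] using hj, by simp⟩)
    exact ⟨s, orbit_trans (hmv_orbit t i h) hs, h'⟩
  · push Not at hex
    have down : ∀ d : ℕ, ∀ i : ℕ, ∀ h : i + d < k, P (t ⟨i + d, h⟩) → P (t ⟨i, by omega⟩) := by
      intro d
      induction d with
      | zero => intro i h hh; exact hh
      | succ d ihd =>
        intro i h hh
        apply ihd i (by omega)
        by_contra hcon
        exact hex (i + d) h hcon hh
    have hj : ∃ j : Fin k, P (t j) ∧ 3 ≤ (j : ℕ) := by
      by_contra hcon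
      push Not at hcon
      have : (Finset.univ.filter fun j => P (t j)).card ≤ (Finset.range 3).card := by
        apply Finset.card_le_card_of_injOn (fun j : Fin k => (j : ℕ))
        · intro j hj
          simp at hj ⊢
          exact hcon j hj
        · intro x _ y _ e; exact Fin.ext e
      simp at this
      omega
    obtain ⟨j, hj, h3⟩ := hj
    refine ⟨t, Relation.EqvGen.refl _, by omega, ?_⟩
    intro l hl
    refine down (j - l) l (by omega) ?_
    have : (⟨l + (j - l), by omega⟩ : Fin k) = j := Fin.ext (by simp; omega)
    rw [this]; exact hj

open Classical in
lemma main_abs (P : G → Prop) (hP : ∀ x y, P (y⁻¹ * x * y) ↔ P x)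
    (hcomm : ∀ x y, P x → P y → x * y = y * x → x = y)
    {C : Type*} (f : G → C) (F : Finset C) (hF : F.card ≤ 4) (hfF : ∀ x, P x → f x ∈ F)
    (hf : ∀ x y, P x → P y → f x = f y → x = y)
    (t : Fin k → G) (h4 : 4 ≤ {i : Fin k | P (t i)}.ncard) :
    ∃ s : Fin k → G, SameHurwitzOrbit t s ∧ HasConsecutiveEqualPair s := by
  have h4' : 4 ≤ (Finset.univ.filter fun j => P (t j)).card := by
    rw [← Set.ncard_coe_finset]; simpa using h4
  obtain ⟨s, hs, hk, hsP⟩ := to_front P hP _ t rfl h4'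
  suffices ∃ r, SameHurwitzOrbit s r ∧ HasConsecutiveEqualPair r by
    obtain ⟨r, h1, h2⟩ := this
    exact ⟨r, orbit_trans hs h1, h2⟩
  obtain ⟨p, hp⟩ : ∃ p, s ⟨0, by omega⟩ = p := ⟨_, rfl⟩
  obtain ⟨q, hq⟩ : ∃ q, s ⟨0 + 1, by omega⟩ = q := ⟨_, rfl⟩
  obtain ⟨u, hu⟩ : ∃ p, s ⟨2, by omega⟩ = p := ⟨_, rfl⟩
  obtain ⟨v, hv⟩ : ∃ p, s ⟨2 + 1, by omega⟩ = p := ⟨_, rfl⟩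
  have Pp : P p := hp ▸ hsP _ (by simp)
  have Pq : P q := hq ▸ hsP _ (by simp)
  have Pu : P u := hu ▸ hsP _ (by simp)
  have Pv : P v := hv ▸ hsP _ (by simp)
  by_cases hpq : p = q
  · exact ⟨s, Relation.EqvGen.refl _, 0, by omega, by rw [hp, hq, hpq]⟩
  by_cases huv : u = v
  · exact ⟨s, Relation.EqvGen.refl _, 2, by omega, by rw [hu, hv, huv]⟩
  -- distinctness
  have dist : ∀ x y, P x → P y → x ≠ y → y⁻¹ * x * y ≠ x ∧ y⁻¹ * x * y ≠ y := by
    intro x y hx hy hxy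
    constructor
    · intro e
      apply hxy (hcomm x y hx hy _)
      rw [mul_assoc, inv_mul_eq_iff_eq_mul] at e
      exact e
    · intro e
      apply hxy
      rw [mul_assoc, inv_mul_eq_iff_eq_mul] at e
      exact mul_right_cancel e
  have Pc : ∀ x y, P x → P (y⁻¹ * x * y) := fun x y hx => (hP x y).2 hx
  have card3 : ∀ x y z, P x → P y → P z → x ≠ y → x ≠ z → y ≠ z →
      ({f x, f y, f z} : Finset C).card = 3 := by
    intro x y z hx hy hz h1 h2 h3
    rw [Finset.card_eq_three]
    exact ⟨f x, f y, f z, fun e => h1 (hf _ _ hx hy e), fun e => h2 (hf _ _ hx hz e),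
      fun e => h3 (hf _ _ hy hz e), rfl⟩
  obtain ⟨d1, d2⟩ := dist p q Pp Pq hpq
  obtain ⟨d3, d4⟩ := dist q (q⁻¹ * p * q) Pq (Pc _ _ Pp) d2.symm
  obtain ⟨d5, d6⟩ := dist u v Pu Pv huv
  have c1 := card3 q (q⁻¹ * p * q) ((q⁻¹ * p * q)⁻¹ * q * (q⁻¹ * p * q)) Pq (Pc _ _ Pp)
    (Pc _ _ Pq) d2.symm d3.symm d4.symm
  have c2 := card3 u v (v⁻¹ * u * v) Pu Pv (Pc _ _ Pu) huv d5.symm d6.symm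
  have hx : ∃ x, (x = q ∨ x = q⁻¹ * p * q ∨ x = (q⁻¹ * p * q)⁻¹ * q * (q⁻¹ * p * q)) ∧
      (x = u ∨ x = v ∨ x = v⁻¹ * u * v) := by
    by_contra hcon
    push Not at hcon
    have hdis : Disjoint ({f q, f (q⁻¹ * p * q), f ((q⁻¹ * p * q)⁻¹ * q * (q⁻¹ * p * q))} : Finset C)
        {f u, f v, f (v⁻¹ * u * v)} := by
      have aux : ∀ x, P x → (x = q ∨ x = q⁻¹ * p * q ∨ x = (q⁻¹ * p * q)⁻¹ * q * (q⁻¹ * p * q)) →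
          f x ∉ ({f u, f v, f (v⁻¹ * u * v)} : Finset C) := by
        intro x hx hx'
        obtain ⟨e1, e2, e3⟩ := hcon x hx'
        simp only [Finset.mem_insert, Finset.mem_singleton, not_or]
        exact ⟨fun e => e1 (hf _ _ hx Pu e), fun e => e2 (hf _ _ hx Pv e),
          fun e => e3 (hf _ _ hx (Pc _ _ Pu) e)⟩
      rw [Finset.disjoint_left]
      intro c hc
      simp only [Finset.mem_insert, Finset.mem_singleton] at hc
      rcases hc with rfl | rfl | rfl
      · exact aux _ Pq (Or.inl rfl)
      · exact aux _ (Pc _ _ Pp) (Or.inr (Or.inl rfl))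
      · exact aux _ (Pc _ _ Pq) (Or.inr (Or.inr rfl))
    have hsub := Finset.card_le_card (Finset.union_subset
      (s := {f q, f (q⁻¹ * p * q), f ((q⁻¹ * p * q)⁻¹ * q * (q⁻¹ * p * q))})
      (t := {f u, f v, f (v⁻¹ * u * v)}) (u := F) (by
        intro c hc
        simp only [Finset.mem_insert, Finset.mem_singleton] at hc
        rcases hc with rfl | rfl | rfl
        · exact hfF _ Pq
        · exact hfF _ (Pc _ _ Pp)
        · exact hfF _ (Pc _ _ Pq)) (by
        intro c hc
        simp only [Finset.mem_insert, Finset.mem_singleton] at hc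
        rcases hc with rfl | rfl | rfl
        · exact hfF _ Pu
        · exact hfF _ Pv
        · exact hfF _ (Pc _ _ Pu)))
    rw [Finset.card_union_of_disjoint hdis, c1, c2] at hsub
    omega
  obtain ⟨x, hx1, hx2⟩ := hx
  obtain ⟨s1, o1, e1, f1⟩ := rot_last s 0 (by omega) p q x hp hq hx1
  obtain ⟨s2, o2, e2, f2⟩ := rot_first s1 2 (by omega) u v x
    (by rw [f1 _ (by simp) (by simp), hu]) (by rw [f1 _ (by simp) (by simp), hv]) hx2
  refine ⟨s2, orbit_trans o1 o2, 1, by omega, ?_⟩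
  have : s2 ⟨1, by omega⟩ = x := by
    rw [f2 _ (by simp) (by simp)]; exact e1
  rw [this]; exact e2.symm

end Hurwitz

abbrev ECode := (ℤ × ℤ) × (ℤ × ℤ) × (ℤ × ℤ) × (ℤ × ℤ)

def emul (x y : ℤ × ℤ) : ℤ × ℤ := (x.1 * y.1 - x.2 * y.2, x.1 * y.2 + x.2 * y.1 - x.2 * y.2)

def cmul (x y : ECode) : ECode :=
  (emul x.1 y.1 + emul x.2.1 y.2.2.1, emul x.1 y.2.1 + emul x.2.1 y.2.2.2,
   emul x.2.2.1 y.1 + emul x.2.2.2 y.2.2.1, emul x.2.2.1 y.2.1 + emul x.2.2.2 y.2.2.2)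

def cdet (x : ECode) : ℤ × ℤ := emul x.1 x.2.2.2 - emul x.2.1 x.2.2.1

def csub1 (x : ECode) : ECode := (x.1 - (3, 0), x.2.1, x.2.2.1, x.2.2.2 - (3, 0))

def e3 (x : ℤ × ℤ) : ℤ × ℤ := (3 * x.1, 3 * x.2)

def ctriple (x : ECode) : ECode := (e3 x.1, e3 x.2.1, e3 x.2.2.1, e3 x.2.2.2)

def cA : ECode := ((3, 0), (0, 0), (0, 0), (0, 3))
def cB : ECode := ((1, 2), (-3, -3), (2, 2), (2, 1))

def codes : List ECode :=
  [((3, 0), (0, 0), (0, 0), (3, 0)),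
   ((3, 0), (0, 0), (0, 0), (0, 3)),
   ((1, 2), (-3, -3), (2, 2), (2, 1)),
   ((3, 0), (0, 0), (0, 0), (-3, -3)),
   ((1, 2), (3, 0), (2, 2), (-1, 1)),
   ((1, 2), (-3, -3), (-2, 0), (-1, 1)),
   ((-1, -2), (0, -3), (0, 2), (1, -1)),
   ((1, 2), (0, 3), (2, 2), (-1, -2)),
   ((1, 2), (3, 0), (-2, 0), (-1, -2)),
   ((-1, -2), (3, 3), (0, 2), (1, 2)),
   ((1, 2), (-3, -3), (0, -2), (-1, -2)),
   ((-1, -2), (0, -3), (-2, -2), (1, 2)),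
   ((1, 2), (0, 3), (-2, 0), (2, 1)),
   ((-1, -2), (-3, 0), (0, 2), (-2, -1)),
   ((1, 2), (3, 0), (0, -2), (2, 1)),
   ((-1, -2), (3, 3), (-2, -2), (-2, -1)),
   ((-3, 0), (0, 0), (0, 0), (0, -3)),
   ((-1, -2), (0, -3), (2, 0), (-2, -1)),
   ((1, 2), (0, 3), (0, -2), (-1, 1)),
   ((-1, -2), (-3, 0), (-2, -2), (1, -1)),
   ((-3, 0), (0, 0), (0, 0), (3, 3)),
   ((-1, -2), (3, 3), (2, 0), (1, -1)),
   ((-3, 0), (0, 0), (0, 0), (-3, 0)),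
   ((-1, -2), (-3, 0), (2, 0), (1, 2))]

def F1 : List ECode := codes.filter fun c => cdet (csub1 c) = 0 ∧ cdet c = (0, 9)
def F2 : List ECode := codes.filter fun c => cdet (csub1 c) = 0 ∧ cdet c = (-9, -9)

lemma codes_A : ∀ c ∈ codes, ∃ d ∈ codes, ctriple d = cmul cA c := by decide +kernel
lemma codes_B : ∀ c ∈ codes, ∃ d ∈ codes, ctriple d = cmul cB c := by decide +kernel
lemma F1_len : F1.length = 4 := by decide +kernel
lemma F2_len : F2.length = 4 := by decide +kernel
lemma F1_comm : ∀ c ∈ F1, ∀ d ∈ F1, cmul c d = cmul d c → c = d := by decide +kernel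
lemma F2_comm : ∀ c ∈ F2, ∀ d ∈ F2, cmul c d = cmul d c → c = d := by decide +kernel

lemma om_prim : IsPrimitiveRoot ω 3 := by
  have := Complex.isPrimitiveRoot_exp 3 (by norm_num)
  simpa [ω] using this

lemma om_sq : ω ^ 2 = -1 - ω := by
  have h := om_prim.geom_sum_eq_zero (by norm_num)
  simp [Finset.sum_range_succ] at h
  linear_combination h

lemma om_cube : ω ^ 3 = 1 := om_prim.pow_eq_one

lemma om_im : ω.im ≠ 0 := by
  intro h
  have h2 := congrArg Complex.re om_sq
  simp [pow_two, h] at h2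
  nlinarith [sq_nonneg (ω.re + 1 / 2)]

def eev (x : ℤ × ℤ) : ℂ := x.1 + x.2 * ω

lemma eev_inj {x y : ℤ × ℤ} (h : eev x = eev y) : x = y := by
  have hi := congrArg Complex.im h
  have hr := congrArg Complex.re h
  simp [eev, om_im] at hi hr
  rw [hi] at hr
  simp at hr
  exact Prod.ext hr hi

lemma eev_mul (x y : ℤ × ℤ) : eev (emul x y) = eev x * eev y := by
  simp only [eev, emul]; push_cast
  linear_combination (-(x.2 : ℂ) * y.2) * om_sq
lemma eev_add (x y : ℤ × ℤ) : eev (x + y) = eev x + eev y := by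
  simp only [eev, Prod.fst_add, Prod.snd_add]; push_cast; ring
lemma eev_sub (x y : ℤ × ℤ) : eev (x - y) = eev x - eev y := by
  simp only [eev, Prod.fst_sub, Prod.snd_sub]; push_cast; ring
lemma eev_three (x : ℤ × ℤ) : eev (e3 x) = 3 * eev x := by
  simp [eev, e3]; ring

def cmat (x : ECode) : Matrix (Fin 2) (Fin 2) ℂ :=
  !![eev x.1 / 3, eev x.2.1 / 3; eev x.2.2.1 / 3, eev x.2.2.2 / 3]

lemma cmat_inj {x y : ECode} (h : cmat x = cmat y) : x = y := by
  have h00 := congrFun (congrFun h 0) 0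
  have h01 := congrFun (congrFun h 0) 1
  have h10 := congrFun (congrFun h 1) 0
  have h11 := congrFun (congrFun h 1) 1
  simp [cmat] at h00 h01 h10 h11
  exact Prod.ext (eev_inj h00) (Prod.ext (eev_inj h01) (Prod.ext (eev_inj h10) (eev_inj h11)))

lemma cmat_mul (x y : ECode) : (3 : ℂ) • (cmat x * cmat y) = cmat (cmul x y) := by
  ext i j
  fin_cases i <;> fin_cases j <;>
    simp [cmat, cmul, eev_mul, eev_add, Matrix.mul_apply, Fin.sum_univ_two] <;> ring

lemma cmat_triple (x : ECode) : cmat (ctriple x) = (3 : ℂ) • cmat x := by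
  ext i j
  fin_cases i <;> fin_cases j <;>
    simp [cmat, ctriple, eev_three] <;> ring

lemma cmat_mul_of {x y z : ECode} (h : ctriple z = cmul x y) : cmat x * cmat y = cmat z := by
  have h1 := cmat_mul x y
  rw [← h, cmat_triple] at h1
  exact smul_right_injective _ (by norm_num : (3 : ℂ) ≠ 0) h1

lemma cmat_det (x : ECode) : 9 * (cmat x).det = eev (cdet x) := by
  simp [cmat, cdet, Matrix.det_fin_two, eev_sub, eev_mul]; ring

lemma cmat_sub (x : ECode) : cmat x - 1 = cmat (csub1 x) := by
  ext i j
  fin_cases i <;> fin_cases j <;>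
    simp [cmat, csub1, eev_sub] <;> simp [eev] <;> ring

lemma cmat_A : cmat cA = AMat := by
  ext i j
  fin_cases i <;> fin_cases j <;> simp [cmat, cA, AMat, eev]

lemma cmat_B : cmat cB = BMat := by
  ext i j
  fin_cases i <;> fin_cases j <;> simp [cmat, cB, BMat, eev, om_sq] <;> ring

lemma cube_A : AMat * (AMat * AMat) = 1 := by
  ext i j
  fin_cases i <;> fin_cases j <;> simp [AMat, Matrix.mul_apply, Fin.sum_univ_two]
  linear_combination om_cube

lemma cube_B : BMat * (BMat * BMat) = 1 := by
  have h1 : BMat * BMat = cmat ((-1, -2), (0, -3), (0, 2), (1, -1)) := by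
    rw [← cmat_B]; exact cmat_mul_of (by decide +kernel)
  rw [h1, ← cmat_B, cmat_mul_of (z := ((3, 0), (0, 0), (0, 0), (3, 0))) (by decide +kernel)]
  ext i j
  fin_cases i <;> fin_cases j <;> simp [cmat, eev]

lemma inv_eq_of_cube (g : GL (Fin 2) ℂ) (M : Matrix (Fin 2) (Fin 2) ℂ) (hg : g.val = M)
    (hM : M * (M * M) = 1) : g⁻¹ = g * g := by
  apply inv_eq_of_mul_eq_one_right
  ext1
  simp [hg, hM]

lemma exists_code (g : GL (Fin 2) ℂ) (hg : g ∈ G4) : ∃ c ∈ codes, g.val = cmat c := by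
  have stepA : ∀ y : GL (Fin 2) ℂ, (∃ c ∈ codes, y.val = cmat c) → ∀ x : GL (Fin 2) ℂ,
      x.val = AMat ∨ x.val = BMat → ∃ c ∈ codes, (x * y).val = cmat c := by
    rintro y ⟨c, hc, e⟩ x (hx | hx)
    · obtain ⟨d, hd, h⟩ := codes_A c hc
      exact ⟨d, hd, by rw [Units.val_mul, hx, e, ← cmat_A, cmat_mul_of h]⟩
    · obtain ⟨d, hd, h⟩ := codes_B c hc
      exact ⟨d, hd, by rw [Units.val_mul, hx, e, ← cmat_B, cmat_mul_of h]⟩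
  induction hg using Subgroup.closure_induction_left with
  | one =>
    refine ⟨((3, 0), (0, 0), (0, 0), (3, 0)), by decide +kernel, ?_⟩
    ext i j
    fin_cases i <;> fin_cases j <;> simp [cmat, eev]
  | mul_left x hx y hy ih => exact stepA y ih x hx
  | inv_mul_cancel x hx y hy ih =>
    have : x⁻¹ = x * x := by
      rcases hx with hx | hx
      · exact inv_eq_of_cube x _ hx cube_A
      · exact inv_eq_of_cube x _ hx cube_B
    rw [this, mul_assoc]
    exact stepA _ (stepA y ih x hx) x hx

lemma mat_mul (x y : G4) : mat (x * y) = mat x * mat y := by simp [mat]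

lemma mat_inj {x y : G4} (h : mat x = mat y) : x = y := Subtype.ext (Units.ext h)

def code (g : G4) : ECode := (exists_code g.1 g.2).choose
lemma code_mem (g : G4) : code g ∈ codes := (exists_code g.1 g.2).choose_spec.1
lemma code_mat (g : G4) : mat g = cmat (code g) := (exists_code g.1 g.2).choose_spec.2

lemma code_refl {g : G4} (h : (mat g - 1).det = 0) : cdet (csub1 (code g)) = 0 := by
  apply eev_inj
  rw [← cmat_det, ← cmat_sub, ← code_mat, h]
  simp [eev]

lemma code_R1 (g : G4) (h : g ∈ R1) : code g ∈ F1 := by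
  have h2 : cdet (code g) = (0, 9) := by
    apply eev_inj
    rw [← cmat_det, ← code_mat, h.2]
    simp [eev]
  simp [F1, code_mem, h2, code_refl h.1.2]

lemma code_R2 (g : G4) (h : g ∈ R2) : code g ∈ F2 := by
  have h2 : cdet (code g) = (-9, -9) := by
    apply eev_inj
    rw [← cmat_det, ← code_mat, h.2, om_sq]
    simp [eev]; ring
  simp [F2, code_mem, h2, code_refl h.1.2]

lemma code_inj {x y : G4} (h : code x = code y) : x = y := by
  apply mat_inj
  rw [code_mat, code_mat, h]

lemma code_comm {x y : G4} (h : x * y = y * x) :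
    cmul (code x) (code y) = cmul (code y) (code x) := by
  apply cmat_inj
  rw [← cmat_mul, ← cmat_mul, ← code_mat, ← code_mat, ← mat_mul, ← mat_mul, h]

lemma conj_det (x y : G4) : (mat (y⁻¹ * x * y)).det = (mat x).det := by
  have h1 : mat y⁻¹ * mat y = 1 := by rw [← mat_mul]; simp [mat]
  have h2 := congrArg Matrix.det h1
  rw [Matrix.det_mul, Matrix.det_one] at h2
  rw [mat_mul, mat_mul, Matrix.det_mul, Matrix.det_mul]
  linear_combination (mat x).det * h2

lemma conj_det_sub (x y : G4) : (mat (y⁻¹ * x * y) - 1).det = (mat x - 1).det := by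
  have h1 : mat y⁻¹ * mat y = 1 := by rw [← mat_mul]; simp [mat]
  have h2 := congrArg Matrix.det h1
  rw [Matrix.det_mul, Matrix.det_one] at h2
  have : mat (y⁻¹ * x * y) - 1 = mat y⁻¹ * (mat x - 1) * mat y := by
    rw [mat_mul, mat_mul, mul_sub, sub_mul, mul_one, h1]
  rw [this, Matrix.det_mul, Matrix.det_mul]
  linear_combination (mat x - 1).det * h2

lemma conj_refl (x y : G4) : IsReflection (y⁻¹ * x * y) ↔ IsReflection x := by
  unfold IsReflection
  rw [conj_det_sub]
  have : y⁻¹ * x * y = 1 ↔ x = 1 := by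
    constructor
    · intro e
      rw [mul_assoc, inv_mul_eq_iff_eq_mul, mul_one] at e
      exact mul_eq_right.1 e
    · rintro rfl; simp
  rw [Ne, this]

theorem g4_four_same_class_pair (k : ℕ) (t : Fin k → G4)
    (ht : ∀ i, IsReflection (t i))
    (h4 : 4 ≤ {i : Fin k | t i ∈ R1}.ncard ∨ 4 ≤ {i : Fin k | t i ∈ R2}.ncard) :
    ∃ s : Fin k → G4, SameHurwitzOrbit t s ∧ HasConsecutiveEqualPair s := by
  rcases h4 with h4 | h4
  · refine main_abs (fun g => g ∈ R1) ?_ ?_ code F1.toFinset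
      ((List.toFinset_card_le _).trans F1_len.le) ?_ ?_ t h4
    · intro x y
      simp only [R1, Set.mem_ofPred_eq, conj_refl, conj_det]
    · intro x y hx hy h
      exact code_inj (F1_comm _ (code_R1 x hx) _ (code_R1 y hy) (code_comm h))
    · intro x hx; simpa using code_R1 x hx
    · intro x y _ _ h; exact code_inj h
  · refine main_abs (fun g => g ∈ R2) ?_ ?_ code F2.toFinset
      ((List.toFinset_card_le _).trans F2_len.le) ?_ ?_ t h4
    · intro x y
      simp only [R2, Set.mem_ofPred_eq, conj_refl, conj_det]
    · intro x y hx hy h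
      exact code_inj (F2_comm _ (code_R2 x hx) _ (code_R2 y hy) (code_comm h))
    · intro x hx; simpa using code_R2 x hx
    · intro x y _ _ h; exact code_inj h
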